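/- For every integer p ≥ 0 and every constant c > 0 there exist K < ∞ and ζ₀ > 0 such that for all m ≥ 1, all 0 < ζ ≤ ζ₀, and all x ∈ ℝ^m with Euclidean norm ‖x‖ ≤ c·ζ·√m, one has |L_m(x) − L̂_m^{(p)}(x)| ≤ K·ζ^{p+1}; in particular the constant K can be chosen independently of m. -/

import Mathlib

open MeasureTheory Finset

/-- The standard corner simplex `T_m = {λ ∈ ℝ^m : λ_i ≥ 0, Σ λ_i ≤ 1}`. -/
def cornerSimplex (m : ℕ) : Set (Fin m → ℝ) :=
  {l | (∀ j, 0 ≤ l j) ∧ ∑ j, l j ≤ 1}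

/-- The Laplace transform of the symmetric Dirichlet distribution:
`L_m(x₁,…,x_m) = m!·∫_{T_m} exp(−Σ_j x_j λ_j) dλ`. -/
noncomputable def dirichletLaplace (m : ℕ) (x : Fin m → ℝ) : ℝ :=
  (Nat.factorial m : ℝ) * ∫ l in cornerSimplex m, Real.exp (-∑ j, x j * l j)

/-- The degree-`p` Taylor polynomial of the Dirichlet Laplace transform at the origin:
`L̂_m^{(p)}(x) = m!·Σ_{ℓ=0}^{p} ∫_{T_m} (−⟨x,λ⟩)^ℓ/ℓ! dλ`. -/
noncomputable def dirichletLaplaceTaylor (m p : ℕ) (x : Fin m → ℝ) : ℝ :=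
  (Nat.factorial m : ℝ) * ∑ ℓ ∈ Finset.range (p + 1),
    ∫ l in cornerSimplex m, (-∑ j, x j * l j) ^ ℓ / (Nat.factorial ℓ : ℝ)


def sSx (m : ℕ) (s : ℝ) : Set (Fin m → ℝ) :=
  {l | (∀ j, 0 ≤ l j) ∧ ∑ j, l j ≤ s}

lemma sSx_closed (m : ℕ) (s : ℝ) : IsClosed (sSx m s) := by
  have : sSx m s = (⋂ j, {l : Fin m → ℝ | 0 ≤ l j}) ∩ {l | ∑ j, l j ≤ s} := by
    ext l; simp [sSx]
  rw [this]
  refine (isClosed_iInter fun j => isClosed_le (by fun_prop) (by fun_prop)).inter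
    (isClosed_le (by fun_prop) (by fun_prop))

lemma sSx_compact (m : ℕ) (s : ℝ) : IsCompact (sSx m s) := by
  refine IsCompact.of_isClosed_subset (isCompact_Icc (a := (fun _ => 0 : Fin m → ℝ)) (b := fun _ => s))
    (sSx_closed m s) ?_
  intro l hl
  refine ⟨fun j => hl.1 j, fun j => ?_⟩
  exact (Finset.single_le_sum (f := l) (fun i _ => hl.1 i) (Finset.mem_univ j)).trans hl.2

lemma slice (m : ℕ) (s : ℝ) (j : Fin (m+1)) (f : ℝ → ENNReal) (hf : Measurable f) :
    ∫⁻ l in sSx (m+1) s, f (l j) = ∫⁻ t in Set.Ici (0:ℝ), f t * volume (sSx m (s - t)) := by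
  let A : Set (ℝ × (Fin m → ℝ)) := {z | 0 ≤ z.1 ∧ (∀ i, 0 ≤ z.2 i) ∧ ∑ i, z.2 i ≤ s - z.1}
  have hA : MeasurableSet A := by
    have : A = {z | 0 ≤ z.1} ∩ ((⋂ i, {z : ℝ × (Fin m → ℝ) | 0 ≤ z.2 i}) ∩ {z | ∑ i, z.2 i ≤ s - z.1}) := by
      ext z; simp [A]
    rw [this]
    refine ((isClosed_le (by fun_prop) (by fun_prop)).inter ((isClosed_iInter fun j => isClosed_le (by fun_prop) (by fun_prop)).inter
      (isClosed_le (by fun_prop) (by fun_prop)))).measurableSet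
  let F : ℝ × (Fin m → ℝ) → ENNReal := A.indicator (fun z => f z.1)
  have hF : Measurable F := (hf.comp measurable_fst).indicator hA
  have hp := volume_preserving_piFinSuccAbove (fun _ : Fin (m+1) => ℝ) j
  rw [← lintegral_indicator (sSx_closed _ _).measurableSet]
  have h1 : ∀ l : Fin (m+1) → ℝ, (sSx (m+1) s).indicator (fun l => f (l j)) l
      = F (MeasurableEquiv.piFinSuccAbove (fun _ => ℝ) j l) := by
    intro l
    have : l ∈ sSx (m+1) s ↔ (MeasurableEquiv.piFinSuccAbove (fun _ => ℝ) j l) ∈ A := by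
      change _ ↔ 0 ≤ l j ∧ (∀ i, 0 ≤ l (j.succAbove i)) ∧ ∑ i, l (j.succAbove i) ≤ s - l j
      rw [sSx, Set.mem_ofPred_eq, Fin.sum_univ_succAbove _ j, Fin.forall_iff_succAbove j, and_assoc, le_sub_iff_add_le']
    by_cases h : l ∈ sSx (m+1) s
    · simp only [F]
      rw [Set.indicator_of_mem h, Set.indicator_of_mem (this.1 h)]
      rfl
    · simp only [F]
      rw [Set.indicator_of_notMem h, Set.indicator_of_notMem (fun hh => h (this.2 hh))]
  simp_rw [h1]
  rw [hp.lintegral_comp hF, Measure.volume_eq_prod, lintegral_prod _ hF.aemeasurable,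
    ← lintegral_indicator measurableSet_Ici]
  congr 1
  ext t
  by_cases ht : 0 ≤ t
  · rw [Set.indicator_of_mem (by exact ht)]
    have : ∀ y, F (t, y) = (sSx m (s-t)).indicator (fun _ => f t) y := by
      intro y
      simp [F, A, sSx, Set.indicator, ht]
      congr
    simp_rw [this]
    rw [lintegral_indicator (sSx_closed _ _).measurableSet]
    simp
  · rw [Set.indicator_of_notMem (by exact ht)]
    simp [F, A, ht]

lemma sSx_neg (m : ℕ) (s : ℝ) (hs : s < 0) : sSx m s = ∅ := by
  ext l
  simp only [sSx, Set.mem_ofPred_eq, Set.mem_empty_iff_false, iff_false, not_and, not_le]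
  intro h
  exact hs.trans_le (Finset.sum_nonneg fun i _ => h i)

lemma slice_le (m : ℕ) (s : ℝ) (j : Fin (m+1)) (f : ℝ → ENNReal) (hf : Measurable f)
    (hv : ∀ s, 0 ≤ s → volume (sSx m s) ≤ ENNReal.ofReal (s^m / m.factorial)) :
    ∫⁻ l in sSx (m+1) s, f (l j) ≤
      ∫⁻ t in Set.Icc (0:ℝ) s, f t * ENNReal.ofReal ((s-t)^m / m.factorial) := by
  rw [slice m s j f hf, ← lintegral_indicator measurableSet_Ici, ← lintegral_indicator measurableSet_Icc]
  refine lintegral_mono fun t => ?_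
  by_cases ht : 0 ≤ t
  · by_cases hs : t ≤ s
    · rw [Set.indicator_of_mem (by exact ht), Set.indicator_of_mem (by exact ⟨ht, hs⟩)]
      gcongr
      exact hv _ (by linarith)
    · rw [Set.indicator_of_mem (by exact ht), sSx_neg m (s-t) (by linarith)]
      simp
  · rw [Set.indicator_of_notMem (by exact ht)]
    simp

lemma vol_le (m : ℕ) : ∀ s : ℝ, 0 ≤ s → volume (sSx m s) ≤ ENNReal.ofReal (s^m / m.factorial) := by
  induction m with
  | zero =>
    intro s hs
    calc volume (sSx 0 s) ≤ volume (Set.univ : Set (Fin 0 → ℝ)) := measure_mono (Set.subset_univ _)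
      _ = 1 := by simp [volume_pi]
      _ ≤ _ := by simp
  | succ m ih =>
    intro s hs
    have := slice_le m s 0 (fun _ => 1) measurable_const ih
    simp only [lintegral_const, one_mul, Measure.restrict_apply_univ] at this
    refine this.trans ?_
    rw [← ofReal_integral_eq_lintegral_ofReal]
    · apply ENNReal.ofReal_le_ofReal
      rw [integral_Icc_eq_integral_Ioc, ← intervalIntegral.integral_of_le hs,
        intervalIntegral.integral_div, intervalIntegral.integral_comp_sub_left (fun t => t^m)]
      simp [Nat.factorial_succ]
      apply le_of_eq
      field_simp
    · exact (Continuous.continuousOn (by fun_prop)).integrableOn_Icc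
    · refine (ae_restrict_iff' measurableSet_Icc).2 (Filter.Eventually.of_forall fun t ht => ?_)
      have : 0 ≤ s - t := by linarith [ht.2]
      positivity

lemma exp_lint (n : ℕ) (j : Fin (n+1)) :
    ∫⁻ l in sSx (n+1) 1, ENNReal.ofReal (Real.exp ((n+1) * l j / 2)) ≤
      ENNReal.ofReal (2 * Real.exp 1 / (n+1).factorial) := by
  refine (slice_le n 1 j (fun t => ENNReal.ofReal (Real.exp ((n+1) * t / 2))) (by fun_prop) (vol_le n)).trans ?_
  have hn : (0:ℝ) < n + 1 := by positivity
  let a : ℝ := -((n+1)/2)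
  have ha : a < 0 := by simp only [a]; linarith
  calc _ ≤ ∫⁻ t in Set.Icc (0:ℝ) 1, ENNReal.ofReal (Real.exp 1 / n.factorial * Real.exp (a * t)) := by
        refine setLIntegral_mono (by fun_prop) fun t ht => ?_
        rw [← ENNReal.ofReal_mul (by positivity)]
        apply ENNReal.ofReal_le_ofReal
        have h1 : (1 - t)^n ≤ Real.exp (-(n*t)) := by
          have := pow_le_pow_left₀ (by linarith [ht.2]) (Real.one_sub_le_exp_neg t) n
          refine this.trans (le_of_eq ?_)
          rw [← Real.exp_nat_mul]; ring_nf
        have h2 : Real.exp ((n+1)*t/2) * Real.exp (-(n*t)) ≤ Real.exp 1 * Real.exp (a*t) := by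
          rw [← Real.exp_add, ← Real.exp_add]
          apply Real.exp_le_exp.2
          simp only [a]; nlinarith [ht.2]
        calc _ = Real.exp ((n+1)*t/2) * (1-t)^n / n.factorial := by ring
          _ ≤ Real.exp ((n+1)*t/2) * Real.exp (-(n*t)) / n.factorial := by gcongr
          _ ≤ Real.exp 1 * Real.exp (a*t) / n.factorial := by gcongr
          _ = _ := by ring
    _ ≤ ∫⁻ t in Set.Ici (0:ℝ), ENNReal.ofReal (Real.exp 1 / n.factorial * Real.exp (a * t)) :=
        lintegral_mono_set fun t ht => ht.1
    _ = ∫⁻ t in Set.Ioi (0:ℝ), ENNReal.ofReal (Real.exp 1 / n.factorial * Real.exp (a * t)) :=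
        (setLIntegral_congr Ioi_ae_eq_Ici).symm
    _ = ENNReal.ofReal (∫ t in Set.Ioi (0:ℝ), Real.exp 1 / n.factorial * Real.exp (a * t)) := by
        rw [ofReal_integral_eq_lintegral_ofReal]
        · exact (integrableOn_exp_mul_Ioi ha 0).const_mul _
        · exact Filter.Eventually.of_forall fun t => by positivity
    _ ≤ _ := by
        apply ENNReal.ofReal_le_ofReal
        rw [integral_const_mul, integral_exp_mul_Ioi ha]
        simp [a, Nat.factorial_succ]
        apply le_of_eq
        field_simp

lemma exp_int (n : ℕ) (j : Fin (n+1)) :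
    ∫ l in sSx (n+1) 1, Real.exp ((n+1) * l j / 2) ≤ 2 * Real.exp 1 / (n+1).factorial := by
  rw [integral_eq_lintegral_of_nonneg_ae (Filter.Eventually.of_forall fun t => by positivity)
    (Continuous.aestronglyMeasurable (by fun_prop))]
  exact ENNReal.toReal_le_of_le_ofReal (by positivity) (exp_lint n j)

lemma vol_real (m : ℕ) : volume.real (sSx m 1) ≤ 1 / m.factorial := by
  have := vol_le m 1 zero_le_one
  rw [one_pow] at this
  exact ENNReal.toReal_le_of_le_ofReal (by positivity) this

lemma rem_bound (u θ : ℝ) (h0 : 0 < θ) (h1 : θ ≤ 1) (n : ℕ) :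
    |Real.exp u - ∑ k ∈ range n, u^k / k.factorial| ≤
      n.factorial * θ^n * Real.exp (2 * (|u| / θ)) := by
  have h := Complex.norm_exp_sub_sum_le_norm_mul_exp (u : ℂ) n
  have e : Complex.exp u - ∑ k ∈ range n, (u:ℂ)^k / k.factorial
      = ((Real.exp u - ∑ k ∈ range n, u^k / k.factorial : ℝ) : ℂ) := by
    push_cast; rfl
  rw [e, Complex.norm_real, Complex.norm_real, Real.norm_eq_abs, Real.norm_eq_abs] at h
  refine h.trans ?_
  set v := |u| / θ with hv
  have hv0 : 0 ≤ v := by positivity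
  have hu : |u| = θ * v := by rw [hv]; field_simp
  have h2 := Real.pow_div_factorial_le_exp v hv0 n
  rw [div_le_iff₀ (by positivity)] at h2
  rw [hu, mul_pow, two_mul, Real.exp_add]
  calc θ^n * v^n * Real.exp (θ * v) ≤ θ^n * (Real.exp v * n.factorial) * Real.exp v := by
        gcongr
        nlinarith
    _ = _ := by ring

lemma exp_conv {m : ℕ} (w a : Fin m → ℝ) (hw : ∀ j, 0 ≤ w j) (hs : ∑ j, w j ≤ 1) :
    Real.exp (∑ j, w j * a j) ≤ 1 + ∑ j, w j * Real.exp (a j) := by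
  have := convexOn_exp.map_add_sum_le (t := univ) (w := w) (p := a) (v := 1 - ∑ j, w j) (q := 0)
    (fun i _ => hw i) (by ring) (fun _ _ => Set.mem_univ _) (by linarith) (Set.mem_univ _)
  simp only [smul_eq_mul, mul_zero, zero_add, Real.exp_zero, mul_one] at this
  have h2 : 0 ≤ ∑ j, w j := Finset.sum_nonneg fun i _ => hw i
  linarith

lemma cont_int (m : ℕ) (f : (Fin m → ℝ) → ℝ) (hf : Continuous f) : IntegrableOn f (sSx m 1) :=
  hf.continuousOn.integrableOn_compact (sSx_compact m 1)

/-- **Uniform-in-`m` Taylor error bound.** For every `p ≥ 0` and every `c > 0` there exist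
`K < ∞` and `ζ₀ > 0` such that for all `m ≥ 1`, all `0 < ζ ≤ ζ₀` and all `x ∈ ℝ^m` with
Euclidean norm `‖x‖ ≤ c·ζ·√m`, one has `|L_m(x) − L̂_m^{(p)}(x)| ≤ K·ζ^{p+1}`; in particular
the constant `K` can be chosen independently of `m`. -/
theorem dirichletLaplace_taylor_error_uniform (p : ℕ) (c : ℝ) (hc : 0 < c) :
    ∃ K ζ₀ : ℝ, 0 < ζ₀ ∧
      ∀ m : ℕ, 1 ≤ m → ∀ ζ : ℝ, 0 < ζ → ζ ≤ ζ₀ →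
        ∀ x : EuclideanSpace ℝ (Fin m), ‖x‖ ≤ c * ζ * Real.sqrt m →
          |dirichletLaplace m (fun j => x j) - dirichletLaplaceTaylor m p (fun j => x j)|
            ≤ K * ζ ^ (p + 1) := by
  refine ⟨(p+1).factorial * (4*c)^(p+1) * (1 + 2 * Real.exp 1), 1/(4*c), by positivity, ?_⟩
  intro m hm ζ hζ hζ0 x hx
  obtain ⟨n, rfl⟩ : ∃ n, m = n + 1 := ⟨m - 1, by omega⟩
  set θ : ℝ := 4 * c * ζ with hθ
  have hθ0 : 0 < θ := by positivity
  have hθ1 : θ ≤ 1 := by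
    rw [le_div_iff₀ (by positivity)] at hζ0
    linarith
  have hn : (0:ℝ) < n + 1 := by positivity
  set S : ℝ := c * ζ * (n+1) with hS
  have hS0 : 0 < S := by positivity
  let w : Fin (n+1) → ℝ := fun j => |x j| / S
  have hw : ∀ j, 0 ≤ w j := fun j => by positivity
  have hx1 : ∑ j, |x j| ≤ S := by
    have h1 : (∑ j, |x j|)^2 ≤ (n+1) * ‖x‖^2 := by
      have := sq_sum_le_card_mul_sum_sq (s := univ) (f := fun j => |x j|)
      rw [EuclideanSpace.norm_sq_eq]
      simpa using this
    have h2 : ‖x‖^2 ≤ (c*ζ)^2 * (n+1) := by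
      have := pow_le_pow_left₀ (norm_nonneg x) hx 2
      rw [mul_pow, Real.sq_sqrt (by positivity)] at this
      exact_mod_cast this
    refine abs_le_of_sq_le_sq' ?_ hS0.le |>.2
    calc _ ≤ _ := h1
      _ ≤ (n+1) * ((c*ζ)^2 * (n+1)) := by gcongr
      _ = _ := by rw [hS]; ring
  have hws : ∑ j, w j ≤ 1 := by
    simp only [w]
    rw [← Finset.sum_div, div_le_one hS0]
    exact hx1
  set C : ℝ := (p+1).factorial * θ^(p+1) with hC
  have hC0 : 0 ≤ C := by positivity
  have hpt : ∀ l ∈ sSx (n+1) 1,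
      ‖Real.exp (-∑ j, x j * l j) - ∑ k ∈ range (p+1), (-∑ j, x j * l j)^k / k.factorial‖
        ≤ C * (1 + ∑ j, w j * Real.exp ((n+1) * l j / 2)) := by
    intro l hl
    refine (rem_bound _ θ hθ0 hθ1 (p+1)).trans ?_
    rw [hC]
    gcongr
    refine le_trans (Real.exp_le_exp.2 ?_) (exp_conv w _ hw hws)
    rw [abs_neg]
    have h1 : |∑ j, x j * l j| ≤ ∑ j, |x j| * l j := by
      refine (abs_sum_le_sum_abs _ _).trans (le_of_eq ?_)
      refine Finset.sum_congr rfl fun j _ => ?_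
      rw [abs_mul, abs_of_nonneg (hl.1 j)]
    calc _ ≤ 2 * ((∑ j, |x j| * l j) / θ) := by gcongr
      _ = _ := by
        rw [Finset.sum_div, Finset.mul_sum]
        refine Finset.sum_congr rfl fun j _ => ?_
        simp only [w, hS, hθ]
        field_simp
        ring
  have hdiff : dirichletLaplace (n+1) (fun j => x j) - dirichletLaplaceTaylor (n+1) p (fun j => x j)
      = (n+1).factorial * ∫ l in sSx (n+1) 1, (Real.exp (-∑ j, x j * l j)
        - ∑ k ∈ range (p+1), (-∑ j, x j * l j)^k / k.factorial) := by
    rw [integral_sub, integral_finsetSum, mul_sub]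
    · rfl
    · intro k _
      exact cont_int _ _ (by fun_prop)
    · exact cont_int _ _ (by fun_prop)
    · exact cont_int _ _ (by fun_prop)
  have hint : ∫ l in sSx (n+1) 1, C * (1 + ∑ j, w j * Real.exp ((n+1) * l j / 2))
      ≤ C * ((1 + 2 * Real.exp 1) / (n+1).factorial) := by
    rw [integral_const_mul, integral_add, integral_finsetSum]
    · simp_rw [integral_const_mul]
      gcongr
      rw [add_div]
      refine add_le_add ?_ ?_
      · simpa using vol_real (n+1)
      · calc _ ≤ ∑ j, w j * (2 * Real.exp 1 / (n+1).factorial) := by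
              refine Finset.sum_le_sum fun j _ => ?_
              exact mul_le_mul_of_nonneg_left (exp_int n j) (hw j)
          _ = (∑ j, w j) * (2 * Real.exp 1 / (n+1).factorial) := by rw [Finset.sum_mul]
          _ ≤ 1 * (2 * Real.exp 1 / (n+1).factorial) := by gcongr
          _ = _ := one_mul _
    · intro k _
      exact cont_int _ _ (by fun_prop)
    · exact cont_int _ _ (by fun_prop)
    · exact cont_int _ _ (by fun_prop)
  rw [hdiff, abs_mul, Nat.abs_cast, ← Real.norm_eq_abs]
  have hfin := (norm_integral_le_of_norm_le (cont_int (n+1) (fun l => C * (1 + ∑ j, w j * Real.exp ((n+1) * l j / 2))) (by fun_prop))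
    ((ae_restrict_iff' (sSx_closed _ _).measurableSet).2 (Filter.Eventually.of_forall hpt))).trans hint
  calc _ ≤ ((n+1).factorial : ℝ) * (C * ((1 + 2 * Real.exp 1) / (n+1).factorial)) := by gcongr
    _ = C * (1 + 2 * Real.exp 1) := by field_simp
    _ = _ := by rw [hC, hθ]; ring
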